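/- arXiv:1804.07951 — 6 statements merged into one kernel-verified Lean document; each statement's English description precedes it below -/
import Mathlib

section
/- Let m, c, k, ω be real numbers with 0 < m, 0 < c, 0 < k and 0 < ω, and suppose 2k/m < ω². Then the complex number (iω)² + (c/m)·(iω) + k/m is nonzero and the norm of the frequency response of the autonomous unidirectional constant-spacing controller satisfies ‖((c/m)·(iω) + k/m) / ((iω)² + (c/m)·(iω) + k/m)‖ < 1. -/
theorem stmt0 (m c k ω : ℝ) (hm : 0 < m) (hc : 0 < c) (hk : 0 < k) (hω : 0 < ω)
    (hfreq : 2 * k / m < ω ^ 2) :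
    (Complex.I * (ω : ℂ)) ^ 2 + ((c / m : ℝ) : ℂ) * (Complex.I * (ω : ℂ)) + ((k / m : ℝ) : ℂ) ≠ 0 ∧
    ‖(((c / m : ℝ) : ℂ) * (Complex.I * (ω : ℂ)) + ((k / m : ℝ) : ℂ)) /
        ((Complex.I * (ω : ℂ)) ^ 2 + ((c / m : ℝ) : ℂ) * (Complex.I * (ω : ℂ)) + ((k / m : ℝ) : ℂ))‖ < 1 := by
  have ha : 0 < c / m := div_pos hc hm
  have hb : 0 < k / m := div_pos hk hm
  have hf : 2 * (k / m) < ω ^ 2 := by rw [← mul_div_assoc]; exact hfreq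
  generalize c / m = a at *
  generalize k / m = b at *
  have hD : (Complex.I * (ω : ℂ)) ^ 2 + (a : ℂ) * (Complex.I * (ω : ℂ)) + (b : ℂ)
      = ((b - ω ^ 2 : ℝ) : ℂ) + ((a * ω : ℝ) : ℂ) * Complex.I := by
    push_cast
    rw [mul_pow, Complex.I_sq]
    ring
  have hN : (a : ℂ) * (Complex.I * (ω : ℂ)) + (b : ℂ)
      = (b : ℂ) + ((a * ω : ℝ) : ℂ) * Complex.I := by
    push_cast
    ring
  rw [hD, hN]
  have hne : ((b - ω ^ 2 : ℝ) : ℂ) + ((a * ω : ℝ) : ℂ) * Complex.I ≠ 0 := by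
    intro h
    have h2 := congrArg Complex.im h
    rw [Complex.add_im, Complex.ofReal_im, Complex.im_ofReal_mul, Complex.I_im,
      Complex.zero_im] at h2
    have := mul_pos ha hω
    linarith
  refine ⟨hne, ?_⟩
  rw [norm_div, div_lt_one (norm_pos_iff.mpr hne), Complex.norm_add_mul_I, Complex.norm_add_mul_I]
  apply Real.sqrt_lt_sqrt (by positivity)
  nlinarith [mul_pos (pow_pos hω 2) (sub_pos.mpr hf)]
end

section
/- Let m, c, k, ω be real numbers with 0 < m, 0 < c, 0 < k and 0 < ω. Then ‖((c/m)·(iω) + k/m) / ((iω)² + (c/m)·(iω) + k/m)‖ < 1 if and only if 2k/m < ω². -/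
theorem stmt1 (m c k ω : ℝ) (hm : 0 < m) (hc : 0 < c) (hk : 0 < k) (hω : 0 < ω) :
    ‖(((c / m : ℝ) : ℂ) * (Complex.I * (ω : ℂ)) + ((k / m : ℝ) : ℂ)) /
        ((Complex.I * (ω : ℂ)) ^ 2 + ((c / m : ℝ) : ℂ) * (Complex.I * (ω : ℂ)) + ((k / m : ℝ) : ℂ))‖ < 1 ↔
      2 * k / m < ω ^ 2 := by
  have ha : 0 < c / m := div_pos hc hm
  rw [mul_div_assoc]
  generalize c / m = a at *
  generalize k / m = b at *
  have h1 : (a : ℂ) * (Complex.I * (ω : ℂ)) + (b : ℂ) = ⟨b, a * ω⟩ := by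
    apply Complex.ext <;> simp
  have h2 : (Complex.I * (ω : ℂ)) ^ 2 + (a : ℂ) * (Complex.I * (ω : ℂ)) + (b : ℂ)
      = ⟨b - ω ^ 2, a * ω⟩ := by
    apply Complex.ext <;> simp [pow_two]
    ring
  rw [h1, h2, norm_div]
  have hne : (⟨b - ω ^ 2, a * ω⟩ : ℂ) ≠ 0 := by
    intro h
    have := congrArg Complex.im h
    simp at this
    rcases this with h | h <;> linarith
  rw [div_lt_one (norm_pos_iff.mpr hne), ← sq_lt_sq₀ (norm_nonneg _) (norm_nonneg _),
    Complex.sq_norm, Complex.sq_norm, Complex.normSq_mk, Complex.normSq_mk]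
  have hw : 0 < ω ^ 2 := by positivity
  constructor
  · intro h
    by_contra hh
    push Not at hh
    nlinarith [mul_nonneg hw.le (sub_nonneg.mpr hh)]
  · intro h
    nlinarith [mul_pos hw (sub_pos.mpr h)]
end

section
/- Let m, c, k, ω be positive reals with 2k/m < ω², set s = iω, and let z₁, z₂ : ℝ → ℂ. Assume: z₁ and z₂ are twice differentiable with continuous first and second derivatives on [0,∞); z₁, z₁', z₂, z₂', z₂'' are all of exponential order a for some real a with a < 0; z₁(0) = 0, z₂(0) = 0 and z₂'(0) = 0; the differential equation z₂''(t) + (c/m)·z₂'(t) + (k/m)·z₂(t) = (c/m)·z₁'(t) + (k/m)·z₁(t) holds for all t ≥ 0; and L[z₁](s) ≠ 0. Then ‖L[z₂](s) / L[z₁](s)‖ < 1, i.e., the platoon with autonomous unidirectional constant-spacing controller is stable at frequency ω. -/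
open MeasureTheory

/-- The Laplace transform of `f : ℝ → ℂ` at `s : ℂ`:  `∫ t in (0,∞), e^{-s t} f t`. -/
noncomputable def laplace (f : ℝ → ℂ) (s : ℂ) : ℂ :=
  ∫ t in Set.Ioi (0 : ℝ), Complex.exp (-(s * t)) * f t

/-- `f` is of exponential order `a`: there is `M > 0` with `‖f t‖ ≤ M e^{a t}` for `t ≥ 0`. -/
def ExpOrder (f : ℝ → ℂ) (a : ℝ) : Prop :=
  ∃ M > 0, ∀ t ≥ (0 : ℝ), ‖f t‖ ≤ M * Real.exp (a * t)

theorem aux_norm (ω t : ℝ) : ‖Complex.exp (-(Complex.I * (ω : ℂ) * t))‖ = 1 := by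
  rw [Complex.norm_exp]; simp

theorem aux_int (ω a : ℝ) (ha : a < 0) (f : ℝ → ℂ) (hf : ContinuousOn f (Set.Ici 0))
    (he : ExpOrder f a) :
    IntegrableOn (fun t : ℝ => Complex.exp (-(Complex.I * (ω : ℂ) * t)) * f t) (Set.Ioi 0) := by
  obtain ⟨M, hM, h⟩ := he
  refine Integrable.mono' ((integrableOn_exp_mul_Ioi ha 0).const_mul M) ?_ ?_
  · refine ContinuousOn.aestronglyMeasurable ?_ measurableSet_Ioi
    refine ContinuousOn.mul (Continuous.continuousOn (by fun_prop)) (hf.mono Set.Ioi_subset_Ici_self)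
  · refine (ae_restrict_mem measurableSet_Ioi).mono fun t ht => ?_
    rw [norm_mul, aux_norm, one_mul]
    exact h t (le_of_lt ht)

theorem aux_deriv (ω a : ℝ) (ha : a < 0) (f f' : ℝ → ℂ)
    (hd : ∀ t ∈ Set.Ici (0 : ℝ), HasDerivWithinAt f (f' t) (Set.Ici 0) t)
    (hf' : ContinuousOn f' (Set.Ici 0))
    (he : ExpOrder f a) (he' : ExpOrder f' a) (h0 : f 0 = 0) :
    laplace f' (Complex.I * (ω : ℂ)) = Complex.I * (ω : ℂ) * laplace f (Complex.I * (ω : ℂ)) := by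
  have hf : ContinuousOn f (Set.Ici 0) := fun t ht => (hd t ht).continuousWithinAt
  have i1 := aux_int ω a ha f hf he
  have i2 := aux_int ω a ha f' hf' he'
  have hexp : ∀ t : ℝ, HasDerivAt (fun t : ℝ => Complex.exp (-(Complex.I * (ω : ℂ) * t)))
      (Complex.exp (-(Complex.I * (ω : ℂ) * t)) * (-(Complex.I * (ω : ℂ) * 1))) t := by
    intro t
    exact (((Complex.ofRealCLM.hasDerivAt (x := t)).const_mul (Complex.I * (ω : ℂ))).neg).cexp
  have key := integral_Ioi_of_hasDerivAt_of_tendsto (a := (0:ℝ)) (m := (0:ℂ))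
    (f := fun t : ℝ => Complex.exp (-(Complex.I * (ω : ℂ) * t)) * f t)
    (f' := fun t : ℝ => Complex.exp (-(Complex.I * (ω : ℂ) * t)) * f' t
      - (Complex.I * (ω : ℂ)) * (Complex.exp (-(Complex.I * (ω : ℂ) * t)) * f t))
    ?_ ?_ (i2.sub (i1.const_mul _)) ?_
  · rw [integral_sub i2 (i1.const_mul _), integral_const_mul] at key
    simp only [h0, mul_zero, sub_zero] at key
    exact sub_eq_zero.mp key
  · exact ContinuousWithinAt.mul (Continuous.continuousWithinAt (by fun_prop)) (hf 0 Set.self_mem_Ici)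
  · intro x hx
    have := (hexp x).mul ((hd x (Set.Ioi_subset_Ici_self hx)).hasDerivAt (Ici_mem_nhds hx))
    refine this.congr_deriv ?_
    ring
  · obtain ⟨M, hM, h⟩ := he
    refine squeeze_zero_norm' (a := fun t : ℝ => M * Real.exp (a * t)) ?_ ?_
    · filter_upwards [Filter.eventually_ge_atTop 0] with t ht
      rw [norm_mul, aux_norm, one_mul]
      exact h t ht
    · have := (Real.tendsto_exp_atBot.comp
        (Filter.tendsto_id.const_mul_atTop_of_neg ha)).const_mul M
      simpa using this

theorem stmt4 (m c k ω : ℝ) (hm : 0 < m) (hc : 0 < c) (hk : 0 < k) (hω : 0 < ω)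
    (hfreq : 2 * k / m < ω ^ 2)
    (s : ℂ) (hs : s = Complex.I * (ω : ℂ)) (a : ℝ) (ha : a < 0)
    (z₁ z₂ z₁' z₁'' z₂' z₂'' : ℝ → ℂ)
    (hdz₁ : ∀ t ∈ Set.Ici (0 : ℝ), HasDerivWithinAt z₁ (z₁' t) (Set.Ici 0) t)
    (hdz₁' : ∀ t ∈ Set.Ici (0 : ℝ), HasDerivWithinAt z₁' (z₁'' t) (Set.Ici 0) t)
    (hdz₂ : ∀ t ∈ Set.Ici (0 : ℝ), HasDerivWithinAt z₂ (z₂' t) (Set.Ici 0) t)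
    (hdz₂' : ∀ t ∈ Set.Ici (0 : ℝ), HasDerivWithinAt z₂' (z₂'' t) (Set.Ici 0) t)
    (hcz₁' : ContinuousOn z₁' (Set.Ici 0)) (hcz₁'' : ContinuousOn z₁'' (Set.Ici 0))
    (hcz₂' : ContinuousOn z₂' (Set.Ici 0)) (hcz₂'' : ContinuousOn z₂'' (Set.Ici 0))
    (hez₁ : ExpOrder z₁ a) (hez₁' : ExpOrder z₁' a)
    (hez₂ : ExpOrder z₂ a) (hez₂' : ExpOrder z₂' a) (hez₂'' : ExpOrder z₂'' a)
    (hinit₁ : z₁ 0 = 0) (hinit₂ : z₂ 0 = 0) (hinit₂' : z₂' 0 = 0)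
    (hode : ∀ t ≥ (0 : ℝ),
      z₂'' t + ((c / m : ℝ) : ℂ) * z₂' t + ((k / m : ℝ) : ℂ) * z₂ t
        = ((c / m : ℝ) : ℂ) * z₁' t + ((k / m : ℝ) : ℂ) * z₁ t)
    (hL : laplace z₁ s ≠ 0) :
    ‖laplace z₂ s / laplace z₁ s‖ < 1 := by
  subst hs
  have hc1 : ContinuousOn z₁ (Set.Ici 0) := fun t ht => (hdz₁ t ht).continuousWithinAt
  have hc2 : ContinuousOn z₂ (Set.Ici 0) := fun t ht => (hdz₂ t ht).continuousWithinAt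
  have e1 := aux_deriv ω a ha z₁ z₁' hdz₁ hcz₁' hez₁ hez₁' hinit₁
  have e2 := aux_deriv ω a ha z₂ z₂' hdz₂ hcz₂' hez₂ hez₂' hinit₂
  have e3 := aux_deriv ω a ha z₂' z₂'' hdz₂' hcz₂'' hez₂' hez₂'' hinit₂'
  have i1 := aux_int ω a ha z₁ hc1 hez₁
  have i1' := aux_int ω a ha z₁' hcz₁' hez₁'
  have i2 := aux_int ω a ha z₂ hc2 hez₂
  have i2' := aux_int ω a ha z₂' hcz₂' hez₂'
  have i2'' := aux_int ω a ha z₂'' hcz₂'' hez₂''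
  have hq : 2 * (k / m) < ω ^ 2 := by rw [← mul_div_assoc]; exact hfreq
  have hp0 : 0 < c / m := div_pos hc hm
  have hq0 : 0 < k / m := div_pos hk hm
  generalize c / m = p at *
  generalize k / m = q at *
  have E : laplace z₂'' (Complex.I * ω) + p * laplace z₂' (Complex.I * ω)
      + q * laplace z₂ (Complex.I * ω)
      = p * laplace z₁' (Complex.I * ω) + q * laplace z₁ (Complex.I * ω) := by
    unfold laplace
    have i3 : IntegrableOn (fun t : ℝ => Complex.exp (-(Complex.I * (ω : ℂ) * t)) * z₂'' t
        + (p : ℂ) * (Complex.exp (-(Complex.I * (ω : ℂ) * t)) * z₂' t)) (Set.Ioi 0) :=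
      i2''.add (i2'.const_mul _)
    rw [← integral_const_mul, ← integral_const_mul, ← integral_const_mul, ← integral_const_mul,
      ← integral_add i2'' (i2'.const_mul _), ← integral_add i3
        (i2.const_mul _), ← integral_add (i1'.const_mul _) (i1.const_mul _)]
    refine setIntegral_congr_fun measurableSet_Ioi fun t ht => ?_
    have := hode t (le_of_lt ht)
    beta_reduce
    linear_combination Complex.exp (-(Complex.I * (ω : ℂ) * t)) * this
  rw [e3, e2, e1] at E
  generalize laplace z₁ (Complex.I * ω) = A at *
  generalize laplace z₂ (Complex.I * ω) = B at *
  have E' : (⟨q - ω ^ 2, p * ω⟩ : ℂ) * B = (⟨q, p * ω⟩ : ℂ) * A := by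
    have h1 : (⟨q - ω ^ 2, p * ω⟩ : ℂ) = q - ω ^ 2 + p * ω * Complex.I := by
      apply Complex.ext <;> simp [pow_two]
    have h2 : (⟨q, p * ω⟩ : ℂ) = q + p * ω * Complex.I := by
      apply Complex.ext <;> simp
    rw [h1, h2]
    linear_combination E - (ω : ℂ) ^ 2 * B * Complex.I_sq
  have hlt : ‖(⟨q, p * ω⟩ : ℂ)‖ < ‖(⟨q - ω ^ 2, p * ω⟩ : ℂ)‖ := by
    refine lt_of_pow_lt_pow_left₀ 2 (norm_nonneg _) ?_
    rw [Complex.sq_norm, Complex.sq_norm, Complex.normSq_mk, Complex.normSq_mk]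
    nlinarith [mul_pos (pow_pos hω 2) (sub_pos.mpr hq)]
  have hA : 0 < ‖A‖ := norm_pos_iff.mpr hL
  have hN := congrArg norm E'
  rw [norm_mul, norm_mul] at hN
  rw [norm_div, div_lt_one hA]
  by_contra hcon
  have hcon := not_lt.mp hcon
  have h3 := mul_lt_mul_of_pos_right hlt hA
  have h4 := mul_le_mul_of_nonneg_left hcon (norm_nonneg (⟨q - ω ^ 2, p * ω⟩ : ℂ))
  linarith
end

section
/- Let m, c, k, ω be positive reals. Then ‖((c/m)·(iω) + k/m) / ((iω)² + (2c/m)·(iω) + 2k/m)‖ < 1 if and only if 0 < m²·ω⁴ + (3c² − 4k·m)·ω² + 3k². -/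
theorem stmt10 (m c k ω : ℝ) (hm : 0 < m) (hc : 0 < c) (hk : 0 < k) (hω : 0 < ω) :
    ‖(((c / m : ℝ) : ℂ) * (Complex.I * (ω : ℂ)) + ((k / m : ℝ) : ℂ)) /
        ((Complex.I * (ω : ℂ)) ^ 2 + ((2 * c / m : ℝ) : ℂ) * (Complex.I * (ω : ℂ)) + ((2 * k / m : ℝ) : ℂ))‖ < 1 ↔
      0 < m ^ 2 * ω ^ 4 + (3 * c ^ 2 - 4 * k * m) * ω ^ 2 + 3 * k ^ 2 := by
  have hN : ((c / m : ℝ) : ℂ) * (Complex.I * (ω : ℂ)) + ((k / m : ℝ) : ℂ)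
      = ((k / m : ℝ) : ℂ) + ((c / m * ω : ℝ) : ℂ) * Complex.I := by
    push_cast; ring
  have hD : (Complex.I * (ω : ℂ)) ^ 2 + ((2 * c / m : ℝ) : ℂ) * (Complex.I * (ω : ℂ))
        + ((2 * k / m : ℝ) : ℂ)
      = ((2 * k / m - ω ^ 2 : ℝ) : ℂ) + ((2 * c / m * ω : ℝ) : ℂ) * Complex.I := by
    rw [mul_pow, Complex.I_sq]; push_cast; ring
  have hb : 0 < 2 * c / m * ω := by positivity
  have hpos : 0 < (2 * k / m - ω ^ 2) ^ 2 + (2 * c / m * ω) ^ 2 := by positivity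
  rw [hN, hD, norm_div, Complex.norm_add_mul_I, Complex.norm_add_mul_I,
    div_lt_one (Real.sqrt_pos.mpr hpos), Real.sqrt_lt_sqrt_iff (by positivity), ← sub_pos]
  have e : m ^ 2 * ω ^ 4 + (3 * c ^ 2 - 4 * k * m) * ω ^ 2 + 3 * k ^ 2 =
      m ^ 2 * ((2 * k / m - ω ^ 2) ^ 2 + (2 * c / m * ω) ^ 2
        - ((k / m) ^ 2 + (c / m * ω) ^ 2)) := by
    field_simp; ring
  rw [e, mul_pos_iff_of_pos_left (by positivity)]
end

section
/- Let m, c, k, ca be positive reals, s ∈ ℂ, and let z₁, z₂ : ℝ → ℂ. Assume: z₁ and z₂ are twice differentiable with continuous first and second derivatives on [0,∞); z₁, z₁', z₂, z₂', z₂'' are all of exponential order a for some real a with a < Re s; z₁(0) = 0, z₂(0) = 0 and z₂'(0) = 0; the differential equation z₂''(t) + ((c + ca)/m)·z₂'(t) + (k/m)·z₂(t) = (c/m)·z₁'(t) + (k/m)·z₁(t) holds for all t ≥ 0; s² + ((c + ca)/m)·s + k/m ≠ 0; and L[z₁](s) ≠ 0. Then L[z₂](s) / L[z₁](s) = ((c/m)·s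 + k/m) / (s² + ((c + ca)/m)·s + k/m). -/
open MeasureTheory

theorem lap_bound {f : ℝ → ℂ} {a : ℝ} {s : ℂ} {M : ℝ}
    (hM : ∀ t ≥ (0 : ℝ), ‖f t‖ ≤ M * Real.exp (a * t)) (t : ℝ) (ht : 0 ≤ t) :
    ‖Complex.exp (-(s * t)) * f t‖ ≤ M * Real.exp (-(s.re - a) * t) := by
  rw [norm_mul, Complex.norm_exp]
  have h1 : (-(s * (t : ℂ))).re = -(s.re * t) := by simp
  rw [h1]
  calc Real.exp (-(s.re * t)) * ‖f t‖ ≤ Real.exp (-(s.re * t)) * (M * Real.exp (a * t)) := by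
        gcongr
        exact hM t ht
    _ = M * (Real.exp (-(s.re * t)) * Real.exp (a * t)) := by ring
    _ = M * Real.exp (-(s.re - a) * t) := by
        rw [← Real.exp_add]
        congr 2
        ring

theorem lap_integrable {f : ℝ → ℂ} {a : ℝ} {s : ℂ} (ha : a < s.re)
    (hc : ContinuousOn f (Set.Ici 0)) (he : ExpOrder f a) :
    IntegrableOn (fun t : ℝ => Complex.exp (-(s * t)) * f t) (Set.Ioi 0) := by
  obtain ⟨M, hM0, hM⟩ := he
  have hg : IntegrableOn (fun t : ℝ => M * Real.exp (-(s.re - a) * t)) (Set.Ioi 0) :=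
    (exp_neg_integrableOn_Ioi 0 (sub_pos.2 ha)).const_mul M
  refine Integrable.mono' hg ?_ ?_
  · refine ContinuousOn.aestronglyMeasurable ?_ measurableSet_Ioi
    refine ContinuousOn.mul ?_ (hc.mono Set.Ioi_subset_Ici_self)
    fun_prop
  · refine (ae_restrict_iff' measurableSet_Ioi).2 (Filter.Eventually.of_forall ?_)
    intro t ht
    exact lap_bound hM t (le_of_lt ht)

theorem lap_deriv {f f' : ℝ → ℂ} {a : ℝ} {s : ℂ} (ha : a < s.re)
    (hd : ∀ t ∈ Set.Ici (0 : ℝ), HasDerivWithinAt f (f' t) (Set.Ici 0) t)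
    (hc' : ContinuousOn f' (Set.Ici 0)) (he : ExpOrder f a) (he' : ExpOrder f' a)
    (h0 : f 0 = 0) : laplace f' s = s * laplace f s := by
  have hc : ContinuousOn f (Set.Ici 0) := fun t ht => (hd t ht).continuousWithinAt
  have hi := lap_integrable ha hc he
  have hi' := lap_integrable ha hc' he'
  have key : ∫ t in Set.Ioi (0 : ℝ), (Complex.exp (-(s * t)) * f' t
      - s * (Complex.exp (-(s * t)) * f t)) = 0 - Complex.exp (-(s * (0 : ℝ))) * f 0 := by
    refine integral_Ioi_of_hasDerivAt_of_tendsto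
      (f := fun t : ℝ => Complex.exp (-(s * t)) * f t) ?_ ?_ (hi'.sub (hi.const_mul s)) ?_
    · refine ContinuousWithinAt.mul ?_ (hc 0 Set.self_mem_Ici)
      fun_prop
    · intro t ht
      have h1 : HasDerivAt f (f' t) t := (hd t (Set.Ioi_subset_Ici_self ht)).hasDerivAt (Ici_mem_nhds ht)
      have h2 : HasDerivAt (fun t : ℝ => -(s * (t : ℂ))) (-(s * 1)) t :=
        ((Complex.ofRealCLM.hasDerivAt (x := t)).const_mul s).neg
      refine (h2.cexp.mul h1).congr_deriv ?_
      ring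
    · obtain ⟨M, hM0, hM⟩ := he
      refine squeeze_zero_norm' (a := fun t : ℝ => M * Real.exp (-(s.re - a) * t)) ?_ ?_
      · filter_upwards [Filter.eventually_ge_atTop 0] with t ht
        exact lap_bound hM t ht
      · have h3 : Filter.Tendsto (fun t : ℝ => -(s.re - a) * t) Filter.atTop Filter.atBot :=
          Filter.tendsto_id.const_mul_atTop_of_neg (by linarith)
        simpa using (Real.tendsto_exp_atBot.comp h3).const_mul M
  rw [integral_sub hi' (hi.const_mul s), integral_const_mul, h0] at key
  unfold laplace
  simpa [sub_eq_zero] using key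

theorem stmt14 (m c k ca : ℝ) (hm : 0 < m) (hc : 0 < c) (hk : 0 < k) (hca : 0 < ca)
    (s : ℂ) (a : ℝ) (ha : a < s.re)
    (z₁ z₂ z₁' z₁'' z₂' z₂'' : ℝ → ℂ)
    (hdz₁ : ∀ t ∈ Set.Ici (0 : ℝ), HasDerivWithinAt z₁ (z₁' t) (Set.Ici 0) t)
    (hdz₁' : ∀ t ∈ Set.Ici (0 : ℝ), HasDerivWithinAt z₁' (z₁'' t) (Set.Ici 0) t)
    (hdz₂ : ∀ t ∈ Set.Ici (0 : ℝ), HasDerivWithinAt z₂ (z₂' t) (Set.Ici 0) t)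
    (hdz₂' : ∀ t ∈ Set.Ici (0 : ℝ), HasDerivWithinAt z₂' (z₂'' t) (Set.Ici 0) t)
    (hcz₁' : ContinuousOn z₁' (Set.Ici 0)) (hcz₁'' : ContinuousOn z₁'' (Set.Ici 0))
    (hcz₂' : ContinuousOn z₂' (Set.Ici 0)) (hcz₂'' : ContinuousOn z₂'' (Set.Ici 0))
    (hez₁ : ExpOrder z₁ a) (hez₁' : ExpOrder z₁' a)
    (hez₂ : ExpOrder z₂ a) (hez₂' : ExpOrder z₂' a) (hez₂'' : ExpOrder z₂'' a)
    (hinit₁ : z₁ 0 = 0) (hinit₂ : z₂ 0 = 0) (hinit₂' : z₂' 0 = 0)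
    (hode : ∀ t ≥ (0 : ℝ),
      z₂'' t + (((c + ca) / m : ℝ) : ℂ) * z₂' t + ((k / m : ℝ) : ℂ) * z₂ t
        = ((c / m : ℝ) : ℂ) * z₁' t + ((k / m : ℝ) : ℂ) * z₁ t)
    (hden : s ^ 2 + (((c + ca) / m : ℝ) : ℂ) * s + ((k / m : ℝ) : ℂ) ≠ 0)
    (hL : laplace z₁ s ≠ 0) :
    laplace z₂ s / laplace z₁ s = (((c / m : ℝ) : ℂ) * s + ((k / m : ℝ) : ℂ)) / (s ^ 2 + (((c + ca) / m : ℝ) : ℂ) * s + ((k / m : ℝ) : ℂ)) := by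
  have c₁ : ContinuousOn z₁ (Set.Ici 0) := fun t ht => (hdz₁ t ht).continuousWithinAt
  have c₂ : ContinuousOn z₂ (Set.Ici 0) := fun t ht => (hdz₂ t ht).continuousWithinAt
  have L1 := lap_deriv ha hdz₁ hcz₁' hez₁ hez₁' hinit₁
  have L2 := lap_deriv ha hdz₂ hcz₂' hez₂ hez₂' hinit₂
  have L3 := lap_deriv ha hdz₂' hcz₂'' hez₂' hez₂'' hinit₂'
  have i1 := lap_integrable ha c₁ hez₁
  have i1' := lap_integrable ha hcz₁' hez₁'
  have i2 := lap_integrable ha c₂ hez₂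
  have i2' := lap_integrable ha hcz₂' hez₂'
  have i2'' := lap_integrable ha hcz₂'' hez₂''
  generalize (((c + ca) / m : ℝ) : ℂ) = A at *
  generalize ((k / m : ℝ) : ℂ) = B at *
  generalize ((c / m : ℝ) : ℂ) = C at *
  have key : laplace z₂'' s + A * laplace z₂' s + B * laplace z₂ s
      = C * laplace z₁' s + B * laplace z₁ s := by
    unfold laplace
    simp only [← integral_const_mul]
    have i3 : IntegrableOn (fun t : ℝ => Complex.exp (-(s * t)) * z₂'' t
        + A * (Complex.exp (-(s * t)) * z₂' t)) (Set.Ioi 0) := i2''.add (i2'.const_mul A)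
    rw [← integral_add i2'' (i2'.const_mul A),
      ← integral_add i3 (i2.const_mul B),
      ← integral_add (i1'.const_mul C) (i1.const_mul B)]
    refine setIntegral_congr_fun measurableSet_Ioi ?_
    intro t ht
    have := hode t (le_of_lt ht)
    beta_reduce
    linear_combination Complex.exp (-(s * t)) * this
  rw [L3, L2, L1] at key
  rw [div_eq_div_iff hL hden]
  linear_combination key
end

section
/- Let f : ℝ → ℂ be differentiable on [0,∞) with f and its derivative f' continuous on [0,∞), and suppose both f and f' are of exponential order a for some real a. Then for every s ∈ ℂ with a < Re s, the Laplace transform of the derivative satisfies L[f'](s) = s · L[f](s) − f(0). -/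
open MeasureTheory

theorem laplace_bound_aux (g : ℝ → ℂ) (a M : ℝ) (s : ℂ)
    (hM : ∀ t ≥ (0 : ℝ), ‖g t‖ ≤ M * Real.exp (a * t)) (t : ℝ) (ht : 0 ≤ t) :
    ‖Complex.exp (-(s * t)) * g t‖ ≤ M * Real.exp (-(s.re - a) * t) := by
  have h1 : ‖Complex.exp (-(s * t))‖ = Real.exp (-(s.re * t)) := by
    rw [Complex.norm_exp]; simp
  rw [norm_mul, h1]
  calc Real.exp (-(s.re * t)) * ‖g t‖
      ≤ Real.exp (-(s.re * t)) * (M * Real.exp (a * t)) := by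
        gcongr; exact hM t ht
    _ = M * (Real.exp (-(s.re * t)) * Real.exp (a * t)) := by ring
    _ = _ := by rw [← Real.exp_add]; ring_nf

theorem laplace_integrable_aux (g : ℝ → ℂ) (a : ℝ) (s : ℂ)
    (hc : ContinuousOn g (Set.Ici 0)) (hg : ExpOrder g a) (hs : a < s.re) :
    IntegrableOn (fun t : ℝ => Complex.exp (-(s * t)) * g t) (Set.Ioi 0) := by
  obtain ⟨M, -, hM⟩ := hg
  have hi : IntegrableOn (fun t : ℝ => M * Real.exp (-(s.re - a) * t)) (Set.Ioi 0) :=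
    (exp_neg_integrableOn_Ioi 0 (sub_pos.2 hs)).const_mul M
  refine Integrable.mono' hi ?_ ?_
  · apply ContinuousOn.aestronglyMeasurable _ measurableSet_Ioi
    apply ContinuousOn.mul
    · fun_prop
    · exact hc.mono Set.Ioi_subset_Ici_self
  · filter_upwards [ae_restrict_mem measurableSet_Ioi] with t ht
    exact laplace_bound_aux g a M s hM t (le_of_lt ht)

theorem stmt16 (f f' : ℝ → ℂ) (a : ℝ)
    (hdf : ∀ t ∈ Set.Ici (0 : ℝ), HasDerivWithinAt f (f' t) (Set.Ici 0) t)
    (hcf : ContinuousOn f (Set.Ici 0)) (hcf' : ContinuousOn f' (Set.Ici 0))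
    (hef : ExpOrder f a) (hef' : ExpOrder f' a) :
    ∀ s : ℂ, a < s.re → laplace f' s = s * laplace f s - f 0 := by
  intro s hs
  have hi := laplace_integrable_aux f a s hcf hef hs
  have hi' := laplace_integrable_aux f' a s hcf' hef' hs
  have hE : ∀ t : ℝ, HasDerivAt (fun t : ℝ => Complex.exp (-(s * t)))
      (-s * Complex.exp (-(s * t))) t := by
    intro t
    have h0 : HasDerivAt (fun t : ℝ => (t : ℂ)) 1 t := Complex.ofRealCLM.hasDerivAt
    have h1 := (h0.const_mul s).neg.cexp
    have h2 : -s * Complex.exp (-(s * t)) = Complex.exp (-(s * t)) * -(s * 1) := by ring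
    rw [h2]
    exact h1
  have hlim : Filter.Tendsto (fun t : ℝ => Complex.exp (-(s * t)) * f t) Filter.atTop
      (nhds 0) := by
    obtain ⟨M, -, hM⟩ := hef
    have hz : Filter.Tendsto (fun t : ℝ => M * Real.exp (-(s.re - a) * t)) Filter.atTop
        (nhds 0) := by
      have h2 : Filter.Tendsto (fun t : ℝ => -(s.re - a) * t) Filter.atTop Filter.atBot :=
        Filter.tendsto_id.const_mul_atTop_of_neg (by linarith)
      simpa using (Real.tendsto_exp_atBot.comp h2).const_mul M
    refine squeeze_zero_norm' ?_ hz
    filter_upwards [Filter.eventually_ge_atTop 0] with t ht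
    exact laplace_bound_aux f a M s hM t ht
  have key := integral_Ioi_of_hasDerivAt_of_tendsto (a := (0 : ℝ))
    (f := fun t : ℝ => Complex.exp (-(s * t)) * f t)
    (f' := fun t : ℝ => Complex.exp (-(s * t)) * f' t - s * (Complex.exp (-(s * t)) * f t))
    (m := 0) ?_ ?_ (hi'.sub (hi.const_mul s)) hlim
  · rw [integral_sub hi' (hi.const_mul s), integral_const_mul] at key
    unfold laplace
    simp only [Complex.ofReal_zero, mul_zero, neg_zero, Complex.exp_zero, one_mul] at key
    linear_combination key
  · exact (hE 0).continuousAt.continuousWithinAt.mul (hcf 0 Set.self_mem_Ici)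
  · intro t ht
    have h1 : HasDerivAt f (f' t) t :=
      (hdf t (Set.Ioi_subset_Ici_self ht)).hasDerivAt (Ici_mem_nhds ht)
    have h2 : Complex.exp (-(s * t)) * f' t - s * (Complex.exp (-(s * t)) * f t)
        = -s * Complex.exp (-(s * t)) * f t + Complex.exp (-(s * t)) * f' t := by ring
    rw [h2]
    exact (hE t).mul h1
end
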